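/- Let n ≥ 2 and let u : ℝⁿ → ℝ be Lipschitz, positively one-homogeneous (u(t·x) = t·u(x) for all t ≥ 0 and x ∈ ℝⁿ), smooth on ℝⁿ \ {0}, and satisfy the minimal surface equation (1 + |∇u|²)·Δu − ⟨∇u, (D²u)∇u⟩ = 0 at every point of ℝⁿ \ {0}. Then u is linear: there exists a ∈ ℝⁿ with u(x) = ⟨a, x⟩ for all x ∈ ℝⁿ. -/

import Mathlib

open scoped RealInnerProductSpace

/-- The Hessian of `f` at `x`, applied to the vector `ξ` (i.e. `(D²f(x))ξ`). -/
noncomputable def hess {n : ℕ} (f : EuclideanSpace ℝ (Fin n) → ℝ)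
    (x ξ : EuclideanSpace ℝ (Fin n)) : EuclideanSpace ℝ (Fin n) :=
  fderiv ℝ (gradient f) x ξ

/-- The Laplacian of `f` at `x`, as the trace of the Hessian. -/
noncomputable def lap {n : ℕ} (f : EuclideanSpace ℝ (Fin n) → ℝ)
    (x : EuclideanSpace ℝ (Fin n)) : ℝ :=
  ∑ i, ⟪hess f x (EuclideanSpace.single i 1), EuclideanSpace.single i 1⟫

/-- `f` satisfies the translator equation with velocity `(v', vn) ∈ ℝⁿ × ℝ` at the point `x`:
`(1 + |∇f|²)·Δf − ⟨∇f, (D²f)∇f⟩ = (v_{n+1} − ⟨v', ∇f⟩)·(1 + |∇f|²)`. -/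
def TranslatorEqAt {n : ℕ} (f : EuclideanSpace ℝ (Fin n) → ℝ)
    (v' : EuclideanSpace ℝ (Fin n)) (vn : ℝ) (x : EuclideanSpace ℝ (Fin n)) : Prop :=
  (1 + ‖gradient f x‖ ^ 2) * lap f x - ⟪gradient f x, hess f x (gradient f x)⟫
    = (vn - ⟪v', gradient f x⟫) * (1 + ‖gradient f x‖ ^ 2)

open Set Metric Filter Topology

/-- The operator `T ↦ (1 + |p|²) tr T - T(p, p)` on bilinear forms: the second order part of the
minimal surface equation at a point where the gradient is `p`. -/
noncomputable def minimalOp {n : ℕ} (p : EuclideanSpace ℝ (Fin n))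
    (T : EuclideanSpace ℝ (Fin n) →L[ℝ] EuclideanSpace ℝ (Fin n) →L[ℝ] ℝ) : ℝ :=
  (1 + ‖p‖ ^ 2) * ∑ i, T (EuclideanSpace.single i 1) (EuclideanSpace.single i 1) - T p p

theorem minimalOp_add {n : ℕ} (p : EuclideanSpace ℝ (Fin n))
    (S T : EuclideanSpace ℝ (Fin n) →L[ℝ] EuclideanSpace ℝ (Fin n) →L[ℝ] ℝ) :
    minimalOp p (S + T) = minimalOp p S + minimalOp p T := by
  simp only [minimalOp, add_apply, Finset.sum_add_distrib]
  ring

theorem minimalOp_smul {n : ℕ} (p : EuclideanSpace ℝ (Fin n)) (c : ℝ)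
    (T : EuclideanSpace ℝ (Fin n) →L[ℝ] EuclideanSpace ℝ (Fin n) →L[ℝ] ℝ) :
    minimalOp p (c • T) = c * minimalOp p T := by
  simp only [minimalOp, smul_apply, smul_eq_mul, ← Finset.mul_sum]
  ring

/-- The form `|p|² tr T - T(p, p)` is half the sum of the values of `T` on the vectors
`pⱼ eᵢ - pᵢ eⱼ`. -/
theorem sum_sum_apply_eq {n : ℕ} (p : EuclideanSpace ℝ (Fin n))
    (T : EuclideanSpace ℝ (Fin n) →L[ℝ] EuclideanSpace ℝ (Fin n) →L[ℝ] ℝ) :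
    ∑ i, ∑ j, T (p j • EuclideanSpace.single i 1 - p i • EuclideanSpace.single j 1)
        (p j • EuclideanSpace.single i 1 - p i • EuclideanSpace.single j 1) =
      2 * (‖p‖ ^ 2 * ∑ i, T (EuclideanSpace.single i 1) (EuclideanSpace.single i 1) - T p p) := by
  have hp : p = ∑ i, p i • EuclideanSpace.single i (1 : ℝ) := by
    ext k
    simp [Finset.sum_apply, Pi.single_apply]
  have hT : T p p = ∑ i, ∑ j, p i * p j *
      T (EuclideanSpace.single i 1) (EuclideanSpace.single j 1) := by
    conv_lhs => rw [hp]
    simp only [map_sum, map_smul, sum_apply, smul_apply, smul_eq_mul, Finset.mul_sum]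
    rw [Finset.sum_comm]
    exact Finset.sum_congr rfl fun i _ => Finset.sum_congr rfl fun j _ => by ring
  have hN : ‖p‖ ^ 2 * ∑ i, T (EuclideanSpace.single i 1) (EuclideanSpace.single i 1) =
      ∑ i, ∑ j, p j ^ 2 * T (EuclideanSpace.single i 1) (EuclideanSpace.single i 1) := by
    rw [EuclideanSpace.real_norm_sq_eq, Finset.sum_mul_sum, Finset.sum_comm]
  have h1 : ∑ i, ∑ j, p j ^ 2 * T (EuclideanSpace.single i 1) (EuclideanSpace.single i 1) =
      ∑ i, ∑ j, p i ^ 2 * T (EuclideanSpace.single j 1) (EuclideanSpace.single j 1) :=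
    Finset.sum_comm
  have h2 : ∑ i, ∑ j, p i * p j * T (EuclideanSpace.single i 1) (EuclideanSpace.single j 1) =
      ∑ i, ∑ j, p i * p j * T (EuclideanSpace.single j 1) (EuclideanSpace.single i 1) := by
    rw [Finset.sum_comm]
    exact Finset.sum_congr rfl fun i _ => Finset.sum_congr rfl fun j _ => by ring
  rw [hN, hT, two_mul]
  nth_rewrite 2 [h1]
  nth_rewrite 2 [h2]
  simp only [← Finset.sum_sub_distrib, ← Finset.sum_add_distrib]
  refine Finset.sum_congr rfl fun i _ => Finset.sum_congr rfl fun j _ => ?_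
  simp only [map_sub, map_smul, sub_apply, smul_apply, smul_eq_mul]
  ring

theorem minimalOp_nonpos {n : ℕ} (p : EuclideanSpace ℝ (Fin n))
    {T : EuclideanSpace ℝ (Fin n) →L[ℝ] EuclideanSpace ℝ (Fin n) →L[ℝ] ℝ}
    (hT : ∀ ξ, T ξ ξ ≤ 0) : minimalOp p T ≤ 0 := by
  have h1 := sum_sum_apply_eq p T
  have h2 := Finset.sum_nonpos fun i (_ : i ∈ Finset.univ) =>
    Finset.sum_nonpos fun j (_ : j ∈ Finset.univ) =>
      hT (p j • EuclideanSpace.single i 1 - p i • EuclideanSpace.single j 1)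
  have h3 := Finset.sum_nonpos fun i (_ : i ∈ Finset.univ) => hT (EuclideanSpace.single i 1)
  rw [minimalOp]
  linarith

/-- The Hessian of a `C²` function is negative semidefinite at a local maximum. -/
theorem IsLocalMax.fderiv_fderiv_nonpos {E : Type*} [NormedAddCommGroup E] [NormedSpace ℝ E]
    {f : E → ℝ} {a : E} (hmax : IsLocalMax f a) (hf : ContDiffAt ℝ 2 f a) (ξ : E) :
    fderiv ℝ (fderiv ℝ f) a ξ ξ ≤ 0 := by
  by_contra! hpos
  have hline : ∀ t : ℝ, HasDerivAt (fun t : ℝ => a + t • ξ) ξ t := fun t => by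
    simpa using ((hasDerivAt_id t).smul_const ξ).const_add a
  have hcont : Tendsto (fun t : ℝ => a + t • ξ) (𝓝 0) (𝓝 a) := by
    simpa using (hline 0).continuousAt.tendsto
  have hd : ∀ᶠ t in 𝓝 (0 : ℝ), HasDerivAt (fun t : ℝ => f (a + t • ξ))
      (fderiv ℝ f (a + t • ξ) ξ) t := by
    filter_upwards [hcont.eventually (hf.eventually (by simp))] with t ht
    exact (ht.differentiableAt (by simp)).hasFDerivAt.comp_hasDerivAt t (hline t)
  have hderiv : deriv (fun t : ℝ => f (a + t • ξ)) =ᶠ[𝓝 0]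
      fun t => fderiv ℝ f (a + t • ξ) ξ := hd.mono fun t ht => ht.deriv
  have hd2 : HasDerivAt (fun t : ℝ => fderiv ℝ f (a + t • ξ) ξ)
      (fderiv ℝ (fderiv ℝ f) a ξ ξ) 0 := by
    have h1 : HasFDerivAt (fderiv ℝ f) (fderiv ℝ (fderiv ℝ f) a) (a + (0 : ℝ) • ξ) := by
      simpa using ((hf.fderiv_right (m := 1) (by norm_num)).differentiableAt
        (by simp)).hasFDerivAt
    have h2 := h1.comp_hasDerivAt (0 : ℝ) (hline 0)
    simpa using h2.clm_apply (hasDerivAt_const (0 : ℝ) ξ)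
  have hdd : deriv (deriv fun t : ℝ => f (a + t • ξ)) 0 = fderiv ℝ (fderiv ℝ f) a ξ ξ := by
    rw [hderiv.deriv_eq, hd2.deriv]
  have hmax' : IsLocalMax (fun t : ℝ => f (a + t • ξ)) 0 := by
    have : ∀ᶠ t in 𝓝 (0 : ℝ), f (a + t • ξ) ≤ f a := hcont.eventually hmax
    simpa [IsLocalMax, IsMaxFilter] using this
  have hmin : IsLocalMin (fun t : ℝ => f (a + t • ξ)) 0 :=
    isLocalMin_of_deriv_deriv_pos (by rwa [hdd]) hmax'.deriv_eq_zero
      hd.self_of_nhds.continuousAt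
  have hconst : (fun t : ℝ => f (a + t • ξ)) =ᶠ[𝓝 0] fun _ => f a := by
    filter_upwards [hmax', hmin] with t h1 h2
    have := le_antisymm h1 h2
    simpa using this
  have : deriv (deriv fun t : ℝ => f (a + t • ξ)) 0 = 0 := by
    rw [hconst.deriv.deriv_eq]
    simp
  linarith

section Barrier

variable {E : Type*} [NormedAddCommGroup E] [InnerProductSpace ℝ E]

theorem hasFDerivAt_exp_neg_mul_norm_sq (α : ℝ) (y x : E) :
    HasFDerivAt (fun x => Real.exp (-α * ‖x - y‖ ^ 2))
      ((-(2 * α) * Real.exp (-α * ‖x - y‖ ^ 2)) • innerSL ℝ (x - y)) x := by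
  have h := ((((hasFDerivAt_id (𝕜 := ℝ) x).sub_const y).norm_sq).const_mul (-α)).exp
  refine h.congr_fderiv ?_
  ext ξ
  simp
  ring

theorem fderiv_exp_neg_mul_norm_sq (α : ℝ) (y : E) :
    fderiv ℝ (fun x => Real.exp (-α * ‖x - y‖ ^ 2)) =
      fun x => (-(2 * α) * Real.exp (-α * ‖x - y‖ ^ 2)) • innerSL ℝ (x - y) :=
  funext fun x => (hasFDerivAt_exp_neg_mul_norm_sq α y x).fderiv

theorem fderiv_fderiv_exp_neg_mul_norm_sq (α : ℝ) (y x ξ η : E) :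
    fderiv ℝ (fderiv ℝ (fun x => Real.exp (-α * ‖x - y‖ ^ 2))) x ξ η =
      Real.exp (-α * ‖x - y‖ ^ 2) *
        (4 * α ^ 2 * (⟪x - y, ξ⟫ * ⟪x - y, η⟫) - 2 * α * ⟪ξ, η⟫) := by
  rw [fderiv_exp_neg_mul_norm_sq]
  have h1 := (hasFDerivAt_exp_neg_mul_norm_sq α y x).const_mul (-(2 * α))
  have h2 : HasFDerivAt (fun x => innerSL ℝ (x - y)) (innerSL ℝ) x :=
    (innerSL ℝ).hasFDerivAt.comp x ((hasFDerivAt_id x).sub_const y)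
  have h3 : (innerSL ℝ : E →L[ℝ] E →L[ℝ] ℝ) ξ η = ⟪ξ, η⟫ := rfl
  rw [(h1.fun_smul h2).fderiv]
  simp [h3, inner_sub_left]
  ring

end Barrier

theorem minimalOp_exp_neg_mul_norm_sq {n : ℕ} (α : ℝ) (y x p : EuclideanSpace ℝ (Fin n)) :
    minimalOp p (fderiv ℝ (fderiv ℝ (fun x => Real.exp (-α * ‖x - y‖ ^ 2))) x) =
      Real.exp (-α * ‖x - y‖ ^ 2) *
        (4 * α ^ 2 * ((1 + ‖p‖ ^ 2) * ‖x - y‖ ^ 2 - ⟪x - y, p⟫ ^ 2) -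
          2 * α * ((1 + ‖p‖ ^ 2) * n - ‖p‖ ^ 2)) := by
  have hs : ∑ i, ⟪x - y, EuclideanSpace.single i (1 : ℝ)⟫ *
      ⟪x - y, EuclideanSpace.single i (1 : ℝ)⟫ = ‖x - y‖ ^ 2 := by
    rw [EuclideanSpace.real_norm_sq_eq]
    refine Finset.sum_congr rfl fun i _ => ?_
    simp [EuclideanSpace.inner_single_right]
    ring
  simp only [minimalOp, fderiv_fderiv_exp_neg_mul_norm_sq, ← Finset.mul_sum,
    Finset.sum_sub_distrib, hs]
  simp
  ring

/-- For large `α` the function `x ↦ exp (-α |x - y|²)` is a strict subsolution wherever `x` stays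
away from `y` and the coefficients stay bounded. -/
theorem exists_strict_subsolution {n : ℕ} {c C : ℝ} (hc : 0 < c) (hC : 0 ≤ C) :
    ∃ α : ℝ, 0 < α ∧ ∀ x y p b : EuclideanSpace ℝ (Fin n), c ≤ ‖x - y‖ → ‖x - y‖ ≤ C →
      ‖p‖ ≤ C → ‖b‖ ≤ C →
      0 < minimalOp p (fderiv ℝ (fderiv ℝ (fun x => Real.exp (-α * ‖x - y‖ ^ 2))) x) +
        fderiv ℝ (fun x => Real.exp (-α * ‖x - y‖ ^ 2)) x b := by
  refine ⟨((1 + C ^ 2) * n + C * C + 1) / c ^ 2, by positivity, fun x y p b h1 h2 h3 h4 => ?_⟩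
  set α := ((1 + C ^ 2) * n + C * C + 1) / c ^ 2 with hα
  have hα0 : 0 < α := by positivity
  have hαc : α * c ^ 2 = (1 + C ^ 2) * n + C * C + 1 := by
    rw [hα]; field_simp
  rw [minimalOp_exp_neg_mul_norm_sq, fderiv_exp_neg_mul_norm_sq]
  simp only [smul_apply, innerSL_apply_apply, smul_eq_mul]
  have hxp : ⟪x - y, p⟫ ^ 2 ≤ ‖p‖ ^ 2 * ‖x - y‖ ^ 2 := by
    rw [← sq_abs, ← mul_pow, mul_comm]
    gcongr
    exact abs_real_inner_le_norm _ _
  have hxb : ⟪x - y, b⟫ ≤ C * C :=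
    (real_inner_le_norm _ _).trans (by gcongr)
  have hp : (1 + ‖p‖ ^ 2) * n - ‖p‖ ^ 2 ≤ (1 + C ^ 2) * n := by
    have : (1 + ‖p‖ ^ 2) * (n : ℝ) ≤ (1 + C ^ 2) * n := by gcongr
    nlinarith [sq_nonneg ‖p‖]
  have hx : c ^ 2 ≤ (1 + ‖p‖ ^ 2) * ‖x - y‖ ^ 2 - ⟪x - y, p⟫ ^ 2 := by
    have : c ^ 2 ≤ ‖x - y‖ ^ 2 := by gcongr
    linarith
  have key : 0 < 2 * α * (2 * (α * ((1 + ‖p‖ ^ 2) * ‖x - y‖ ^ 2 - ⟪x - y, p⟫ ^ 2)) -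
      ((1 + ‖p‖ ^ 2) * n - ‖p‖ ^ 2) - ⟪x - y, b⟫) := by
    refine mul_pos (by positivity) ?_
    have := mul_le_mul_of_nonneg_left hx hα0.le
    have : 0 ≤ (1 + C ^ 2) * (n : ℝ) := by positivity
    nlinarith [mul_nonneg hC hC]
  have := mul_pos (Real.exp_pos (-α * ‖x - y‖ ^ 2)) key
  linarith

/-- A solution bounded by `M` that is smaller than `M` on a closed ball, except possibly at one
boundary point `z`, is different from `M` at `z` too. -/
theorem ne_of_touching_closedBall {n : ℕ} {Ω : Set (EuclideanSpace ℝ (Fin n))} (hΩ : IsOpen Ω)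
    {w : EuclideanSpace ℝ (Fin n) → ℝ} {p b : EuclideanSpace ℝ (Fin n) → EuclideanSpace ℝ (Fin n)}
    (hw : ContDiffOn ℝ 2 w Ω) (hp : ContinuousOn p Ω) (hb : ContinuousOn b Ω)
    (heq : ∀ x ∈ Ω, minimalOp (p x) (fderiv ℝ (fderiv ℝ w) x) + fderiv ℝ w x (b x) = 0)
    {M : ℝ} (hM : ∀ x ∈ Ω, w x ≤ M) {y z : EuclideanSpace ℝ (Fin n)} (hyz : y ≠ z)
    (hball : closedBall y (dist z y) ⊆ Ω)
    (hlt : ∀ x ∈ closedBall y (dist z y), x ≠ z → w x < M) : w z ≠ M := by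
  intro hz
  have hR : 0 < dist z y := dist_pos.2 hyz.symm
  have hzΩ : z ∈ Ω := hball (by simp)
  obtain ⟨r, hr, hrΩ⟩ := nhds_basis_closedBall.mem_iff.1 (hΩ.mem_nhds hzΩ)
  set ρ := min r (dist z y / 2) with hρdef
  have hρ : 0 < ρ := by positivity
  have hρΩ : closedBall z ρ ⊆ Ω := (closedBall_subset_closedBall (min_le_left _ _)).trans hrΩ
  have hK : IsCompact (closedBall z ρ) := isCompact_closedBall z ρ
  obtain ⟨C₁, hC₁⟩ := hK.exists_bound_of_continuousOn (hp.mono hρΩ)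
  obtain ⟨C₂, hC₂⟩ := hK.exists_bound_of_continuousOn (hb.mono hρΩ)
  have hρR : ρ ≤ dist z y / 2 := min_le_right _ _
  have hfar : ∀ x ∈ closedBall z ρ, dist z y / 2 ≤ ‖x - y‖ ∧ ‖x - y‖ ≤ 2 * dist z y := by
    intro x hx
    rw [mem_closedBall] at hx
    rw [← dist_eq_norm]
    have h1 := dist_triangle z x y
    have h2 := dist_triangle x z y
    rw [dist_comm z x] at h1
    constructor <;> linarith
  obtain ⟨α, hα, hsub⟩ := exists_strict_subsolution (n := n) (c := dist z y / 2)
    (C := max (2 * dist z y) (max C₁ C₂)) (by positivity) (le_max_of_le_left (by positivity))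
  set φ : EuclideanSpace ℝ (Fin n) → ℝ := fun x => Real.exp (-α * ‖x - y‖ ^ 2) with hφdef
  have hφ : ContDiff ℝ 2 φ := by
    simp only [hφdef]
    exact (contDiff_const.mul ((contDiff_id.sub contDiff_const).norm_sq ℝ)).exp
  have hφ1 : ∀ x, φ x ≤ 1 := fun x => by
    simp only [hφdef, Real.exp_le_one_iff]
    have := mul_nonneg hα.le (sq_nonneg ‖x - y‖)
    linarith
  have hwK : ContinuousOn w (closedBall z ρ) := hw.continuousOn.mono hρΩ
  obtain ⟨ε, hε, hεlt⟩ : ∃ ε : ℝ, 0 < ε ∧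
      ∀ x ∈ sphere z ρ ∩ closedBall y (dist z y), w x + ε < M := by
    have hS : IsCompact (sphere z ρ ∩ closedBall y (dist z y)) :=
      (isCompact_sphere z ρ).inter_right isClosed_closedBall
    rcases (sphere z ρ ∩ closedBall y (dist z y)).eq_empty_or_nonempty with he | hne
    · exact ⟨1, one_pos, by simp [he]⟩
    · obtain ⟨x₀, hx₀, hmax⟩ := hS.exists_isMaxOn hne
        (hwK.mono (inter_subset_left.trans sphere_subset_closedBall))
      have hx₀z : x₀ ≠ z := by
        rintro rfl
        have := hx₀.1
        rw [mem_sphere, dist_self] at this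
        exact hρ.ne this
      have := hlt x₀ hx₀.2 hx₀z
      refine ⟨(M - w x₀) / 2, by linarith, fun x hx => ?_⟩
      have : w x ≤ w x₀ := hmax hx
      linarith
  set v : EuclideanSpace ℝ (Fin n) → ℝ := fun x => w x + ε * φ x with hvdef
  obtain ⟨x₁, hx₁, hx₁max⟩ := hK.exists_isMaxOn ⟨z, mem_closedBall_self hρ.le⟩
    (hwK.add (continuousOn_const.mul hφ.continuous.continuousOn) : ContinuousOn v _)
  have hvz : M + ε * φ z ≤ v x₁ := by
    have : v z ≤ v x₁ := hx₁max (mem_closedBall_self hρ.le)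
    simpa [hvdef, hz] using this
  have hφz : 0 < φ z := Real.exp_pos _
  have hint : x₁ ∈ ball z ρ := by
    by_contra hnot
    have hsph : x₁ ∈ sphere z ρ := by
      rw [mem_ball, not_lt] at hnot
      exact le_antisymm hx₁ hnot
    by_cases hin : x₁ ∈ closedBall y (dist z y)
    · have h1 := hεlt x₁ ⟨hsph, hin⟩
      have h2 := mul_le_mul_of_nonneg_left (hφ1 x₁) hε.le
      simp only [hvdef] at hvz
      have := mul_pos hε hφz
      linarith
    · have h1 : φ x₁ < φ z := by
        rw [mem_closedBall, not_le, dist_eq_norm, dist_eq_norm] at hin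
        simp only [hφdef, Real.exp_lt_exp]
        have : ‖z - y‖ ^ 2 < ‖x₁ - y‖ ^ 2 := by gcongr
        nlinarith
      have h2 := hM x₁ (hρΩ hx₁)
      have h3 := mul_lt_mul_of_pos_left h1 hε
      simp only [hvdef] at hvz
      linarith
  have hx₁Ω := hρΩ hx₁
  have hloc : IsLocalMax v x₁ := hx₁max.isLocalMax (closedBall_mem_nhds_of_mem hint)
  have hwx : ContDiffAt ℝ 2 w x₁ := hw.contDiffAt (hΩ.mem_nhds hx₁Ω)
  have hv : ContDiffAt ℝ 2 v x₁ := hwx.add (contDiffAt_const.mul hφ.contDiffAt)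
  have hfd : fderiv ℝ v =ᶠ[𝓝 x₁] fun x => fderiv ℝ w x + ε • fderiv ℝ φ x := by
    filter_upwards [hwx.eventually (by simp)] with x hx
    exact ((hx.differentiableAt (by simp)).hasFDerivAt.add
      ((hφ.differentiable (by simp) x).hasFDerivAt.const_mul ε)).fderiv
  have hfd2 : fderiv ℝ (fderiv ℝ v) x₁ =
      fderiv ℝ (fderiv ℝ w) x₁ + ε • fderiv ℝ (fderiv ℝ φ) x₁ := by
    rw [hfd.fderiv_eq]
    exact (((hwx.fderiv_right (m := 1) (by norm_num)).differentiableAt (by simp)).hasFDerivAt.add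
      (((hφ.contDiffAt.fderiv_right (m := 1) (by norm_num)).differentiableAt
        (by simp)).hasFDerivAt.const_smul ε)).fderiv
  have h1 : fderiv ℝ w x₁ (b x₁) + ε * fderiv ℝ φ x₁ (b x₁) = 0 := by
    have h := hloc.fderiv_eq_zero
    rw [hfd.self_of_nhds] at h
    simpa using congrArg (fun T => T (b x₁)) h
  have h2 := minimalOp_nonpos (p x₁) (hloc.fderiv_fderiv_nonpos hv)
  rw [hfd2, minimalOp_add, minimalOp_smul] at h2
  have h3 := hsub x₁ y (p x₁) (b x₁) (hfar x₁ hx₁).1 ((hfar x₁ hx₁).2.trans (le_max_left _ _))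
    ((hC₁ x₁ hx₁).trans ((le_max_left _ _).trans (le_max_right _ _)))
    ((hC₂ x₁ hx₁).trans ((le_max_right _ _).trans (le_max_right _ _)))
  have h4 := heq x₁ hx₁Ω
  have h5 := mul_pos hε h3
  linarith

/-- If a closed set `Z` and a point `z ∈ Z` are such that `z` is not interior to `Z`, there is a
small closed ball near `z` that meets `Z` exactly in one boundary point. -/
theorem exists_touching_closedBall {E : Type*} [NormedAddCommGroup E] [InnerProductSpace ℝ E]
    [ProperSpace E] {Z : Set E} {z : E} {r : ℝ} (hr : 0 < r)
    (hZ : IsClosed (Z ∩ closedBall z r)) (hz : z ∈ Z) (hint : Z ∉ 𝓝 z) :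
    ∃ y z', y ≠ z' ∧ z' ∈ Z ∧ closedBall y (dist z' y) ⊆ closedBall z r ∧
      ∀ x ∈ closedBall y (dist z' y), x ≠ z' → x ∉ Z := by
  obtain ⟨y₀, hy₀, hy₀Z⟩ : ∃ y₀ ∈ ball z (r / 2), y₀ ∉ Z := by
    by_contra! h
    exact hint (mem_of_superset (ball_mem_nhds z (half_pos hr)) h)
  have hcpt : IsCompact (Z ∩ closedBall z r) := by
    have := (isCompact_closedBall z r).inter_left hZ
    rwa [inter_assoc, inter_self] at this
  obtain ⟨z', hz', hmin⟩ := hcpt.exists_isMinOn ⟨z, hz, mem_closedBall_self hr.le⟩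
    (f := fun x => dist x y₀) (by fun_prop)
  rw [mem_ball] at hy₀
  have hzy : dist z' y₀ < r / 2 := by
    have : dist z' y₀ ≤ dist z y₀ := hmin ⟨hz, mem_closedBall_self hr.le⟩
    rw [dist_comm z y₀] at this
    linarith
  have hne : y₀ ≠ z' := fun h => hy₀Z (h ▸ hz'.1)
  set y := midpoint ℝ y₀ z' with hy
  have hd : dist z' y = dist z' y₀ / 2 := by
    rw [hy, dist_comm, dist_midpoint_right, dist_comm y₀ z']
    simp
    ring
  have hd' : dist y y₀ = dist z' y₀ / 2 := by
    rw [hy, dist_midpoint_left, dist_comm y₀ z']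
    simp
    ring
  have hpos : 0 < dist z' y₀ := dist_pos.2 hne.symm
  have hsub : ∀ x ∈ closedBall y (dist z' y), dist x y₀ ≤ dist z' y₀ := fun x hx => by
    rw [mem_closedBall, hd] at hx
    have := dist_triangle x y y₀
    linarith
  have hsub' : closedBall y (dist z' y) ⊆ closedBall z r := fun x hx => by
    have h1 := hsub x hx
    have h2 := dist_triangle x y₀ z
    rw [mem_closedBall]
    linarith
  refine ⟨y, z', ?_, hz'.1, hsub', fun x hx hxz hxZ => ?_⟩
  · intro h
    rw [h, dist_self] at hd
    linarith
  have h1 : dist x y₀ = dist z' y₀ := le_antisymm (hsub x hx) (hmin ⟨hxZ, hsub' hx⟩)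
  rw [mem_closedBall, hd] at hx
  refine hxz ?_
  have h2 : dist x y = dist z' y₀ / 2 := by
    have := dist_triangle x y y₀
    linarith
  have h3 : y = midpoint ℝ y₀ x := by
    apply eq_midpoint_of_dist_eq_half
    · rw [dist_comm y₀ y, hd', dist_comm y₀ x, h1]
    · rw [dist_comm y x, h2, dist_comm y₀ x, h1]
  have h4 := (midpoint_eq_midpoint_iff_vsub_eq_vsub ℝ).1 (hy.symm.trans h3)
  exact sub_eq_zero.1 (by simpa using h4.symm)

/-- The strong maximum principle. -/
theorem eq_of_isMaxOn_of_minimalOp {n : ℕ} {Ω : Set (EuclideanSpace ℝ (Fin n))} (hΩ : IsOpen Ω)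
    (hconn : IsPreconnected Ω) {w : EuclideanSpace ℝ (Fin n) → ℝ}
    {p b : EuclideanSpace ℝ (Fin n) → EuclideanSpace ℝ (Fin n)}
    (hw : ContDiffOn ℝ 2 w Ω) (hp : ContinuousOn p Ω) (hb : ContinuousOn b Ω)
    (heq : ∀ x ∈ Ω, minimalOp (p x) (fderiv ℝ (fderiv ℝ w) x) + fderiv ℝ w x (b x) = 0)
    {a : EuclideanSpace ℝ (Fin n)} (ha : a ∈ Ω) (hmax : IsMaxOn w Ω a) :
    ∀ x ∈ Ω, w x = w a := by
  have hZopen : IsOpen (Ω ∩ w ⁻¹' {w a}) := by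
    rw [isOpen_iff_mem_nhds]
    intro z hz
    by_contra hint
    obtain ⟨r, hr, hrΩ⟩ := nhds_basis_closedBall.mem_iff.1 (hΩ.mem_nhds hz.1)
    have hclosed : IsClosed (Ω ∩ w ⁻¹' {w a} ∩ closedBall z r) := by
      have := (hw.continuousOn.mono hrΩ).preimage_isClosed_of_isClosed isClosed_closedBall
        (isClosed_singleton (x := w a))
      rwa [inter_right_comm, inter_eq_right.2 hrΩ]
    obtain ⟨y, z', hyz, hz', hball, hnot⟩ := exists_touching_closedBall hr hclosed hz hint
    refine ne_of_touching_closedBall hΩ hw hp hb heq hmax hyz (hball.trans hrΩ)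
      (fun x hx hxz => ?_) hz'.2
    have hxΩ := hrΩ (hball hx)
    exact lt_of_le_of_ne (hmax hxΩ) fun h => hnot x hx hxz ⟨hxΩ, h⟩
  have hVopen : IsOpen (Ω ∩ w ⁻¹' {w a}ᶜ) :=
    hw.continuousOn.isOpen_inter_preimage hΩ isOpen_compl_singleton
  have hsub : Ω ⊆ Ω ∩ w ⁻¹' {w a} := by
    refine IsPreconnected.subset_left_of_subset_union hZopen hVopen ?_ ?_ ⟨a, ha, ha, rfl⟩ hconn
    · exact disjoint_left.2 fun x hx hx' => hx'.2 hx.2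
    · intro x hx
      by_cases h : w x = w a
      · exact Or.inl ⟨hx, h⟩
      · exact Or.inr ⟨hx, h⟩
  exact fun x hx => (hsub hx).2

section Gradient

variable {n : ℕ} {u : EuclideanSpace ℝ (Fin n) → ℝ} {x : EuclideanSpace ℝ (Fin n)}

theorem ContDiffAt.gradient {k m : WithTop ℕ∞} (hu : ContDiffAt ℝ k u x) (hmk : m + 1 ≤ k) :
    ContDiffAt ℝ m (gradient u) x := by
  rw [contDiffAt_euclidean]
  intro i
  have h : (fun y => _root_.gradient u y i) =
      fun y => fderiv ℝ u y (EuclideanSpace.single i 1) := by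
    ext y
    rw [← inner_gradient_left, EuclideanSpace.inner_single_right]
    simp
  rw [h]
  exact (hu.fderiv_right hmk).clm_apply contDiffAt_const

theorem inner_hess_left (hu : ContDiffAt ℝ 2 u x) (ξ η : EuclideanSpace ℝ (Fin n)) :
    ⟪hess u x ξ, η⟫ = fderiv ℝ (fderiv ℝ u) x ξ η := by
  have h1 := ((hu.gradient (m := 1) (by norm_num)).differentiableAt (by simp)).hasFDerivAt.inner ℝ
    (hasFDerivAt_const η x)
  have h2 := ((hu.fderiv_right (m := 1) (by norm_num)).differentiableAt
    (by simp)).hasFDerivAt.clm_apply (hasFDerivAt_const η x)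
  simp only [inner_gradient_left] at h1
  simpa [hess] using congrArg (fun T => T ξ) (h1.unique h2)

theorem inner_hess_comm (hu : ContDiffAt ℝ 2 u x) (ξ η : EuclideanSpace ℝ (Fin n)) :
    ⟪hess u x ξ, η⟫ = ⟪hess u x η, ξ⟫ := by
  rw [inner_hess_left hu, inner_hess_left hu]
  exact hu.isSymmSndFDerivAt (by simp) ξ η

theorem minimalOp_gradient (hu : ContDiffAt ℝ 2 u x) :
    minimalOp (gradient u x) (fderiv ℝ (fderiv ℝ u) x) =
      (1 + ‖gradient u x‖ ^ 2) * lap u x - ⟪gradient u x, hess u x (gradient u x)⟫ := by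
  rw [real_inner_comm]
  simp only [minimalOp, lap, inner_hess_left hu]

/-- The second derivative of a directional derivative of `u`. -/
theorem fderiv_fderiv_fderiv_apply (hu : ContDiffAt ℝ 3 u x) (e ξ η : EuclideanSpace ℝ (Fin n)) :
    fderiv ℝ (fderiv ℝ (fun y => fderiv ℝ u y e)) x ξ η =
      fderiv ℝ (fderiv ℝ (fderiv ℝ u)) x e ξ η := by
  have hD1 : ContDiffAt ℝ 2 (fderiv ℝ u) x := hu.fderiv_right (by norm_num)
  have hD2 : HasFDerivAt (fderiv ℝ (fderiv ℝ u)) (fderiv ℝ (fderiv ℝ (fderiv ℝ u)) x) x :=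
    ((hD1.fderiv_right (m := 1) (by norm_num)).differentiableAt (by simp)).hasFDerivAt
  have h1 : fderiv ℝ (fun y => fderiv ℝ u y e) =ᶠ[𝓝 x]
      fun y => fderiv ℝ (fderiv ℝ u) y e := by
    filter_upwards [hu.eventually (by simp)] with y hy
    have hy1 := ((hy.fderiv_right (m := 2) (by norm_num)).differentiableAt
      (by simp)).hasFDerivAt.clm_apply (hasFDerivAt_const e y)
    rw [hy1.fderiv]
    ext ζ
    simpa using hy.isSymmSndFDerivAt (by simp; norm_num) ζ e
  rw [h1.fderiv_eq, (hD2.clm_apply (hasFDerivAt_const e x)).fderiv]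
  simpa using congrArg (fun T => T η) (hD1.isSymmSndFDerivAt (by simp) ξ e)

theorem fderiv_fderiv_apply (hu : ContDiffAt ℝ 2 u x) (e ξ : EuclideanSpace ℝ (Fin n)) :
    fderiv ℝ (fun y => fderiv ℝ u y e) x ξ = ⟪hess u x ξ, e⟫ := by
  have h := ((hu.fderiv_right (m := 1) (by norm_num)).differentiableAt
    (by simp)).hasFDerivAt.clm_apply (hasFDerivAt_const e x)
  rw [h.fderiv, inner_hess_left hu]
  simp

/-- The directional derivatives of a solution of the minimal surface equation solve the linearized
equation. -/
theorem minimalOp_fderiv_fderiv_apply (hu : ContDiffAt ℝ 3 u x)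
    (hmse : ∀ᶠ y in 𝓝 x, minimalOp (gradient u y) (fderiv ℝ (fderiv ℝ u) y) = 0)
    (e : EuclideanSpace ℝ (Fin n)) :
    minimalOp (gradient u x) (fderiv ℝ (fderiv ℝ (fun y => fderiv ℝ u y e)) x) +
      fderiv ℝ (fun y => fderiv ℝ u y e) x
        ((2 : ℝ) • (lap u x • gradient u x - hess u x (gradient u x))) = 0 := by
  have hu2 : ContDiffAt ℝ 2 u x := hu.of_le (by norm_num)
  have hD2 : HasFDerivAt (fderiv ℝ (fderiv ℝ u)) (fderiv ℝ (fderiv ℝ (fderiv ℝ u)) x) x :=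
    (((hu.fderiv_right (m := 2) (by norm_num)).fderiv_right (m := 1) (by norm_num)).differentiableAt
      (by simp)).hasFDerivAt
  have hG : HasFDerivAt (gradient u) (fderiv ℝ (gradient u) x) x :=
    ((hu2.gradient (m := 1) (by norm_num)).differentiableAt (by simp)).hasFDerivAt
  have hsum : HasFDerivAt (fun y => ∑ i, fderiv ℝ (fderiv ℝ u) y (EuclideanSpace.single i 1)
      (EuclideanSpace.single i 1)) _ x :=
    HasFDerivAt.fun_sum fun i _ => (hD2.clm_apply (hasFDerivAt_const
      (EuclideanSpace.single i (1 : ℝ)) x)).clm_apply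
        (hasFDerivAt_const (EuclideanSpace.single i (1 : ℝ)) x)
  have htot := ((hG.norm_sq.const_add 1).mul hsum).sub ((hD2.clm_apply hG).clm_apply hG)
  have hzero := htot.unique ((hasFDerivAt_const (0 : ℝ) x).congr_of_eventuallyEq hmse)
  have hE := congrArg (fun T => T e) hzero
  have hH : fderiv ℝ (gradient u) x e = hess u x e := rfl
  simp [hH, ← inner_hess_left hu2] at hE
  have hlap : ∑ i, ⟪hess u x (EuclideanSpace.single i 1), EuclideanSpace.single i 1⟫ =
    lap u x := rfl
  simp only [minimalOp, fderiv_fderiv_fderiv_apply hu]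
  rw [fderiv_fderiv_apply hu2, inner_hess_comm hu2, inner_smul_right, inner_sub_right,
    inner_smul_right]
  have hs : fderiv ℝ u x (hess u x (hess u x e)) = ⟪hess u x (gradient u x), hess u x e⟫ := by
    rw [← inner_gradient_left, real_inner_comm, inner_hess_comm hu2]
  rw [hlap, hs, ← inner_gradient_left, real_inner_comm (hess u x e) (hess u x (gradient u x)),
    real_inner_comm (hess u x e) (gradient u x)] at hE
  linarith

end Gradient

/-- The derivative of a positively one-homogeneous function is positively zero-homogeneous. -/
theorem fderiv_smul_of_homogeneous {E : Type*} [NormedAddCommGroup E] [NormedSpace ℝ E]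
    {u : E → ℝ} (hhom : ∀ t : ℝ, 0 ≤ t → ∀ x, u (t • x) = t * u x) {t : ℝ} (ht : 0 < t) {x : E}
    (hx : DifferentiableAt ℝ u x) (htx : DifferentiableAt ℝ u (t • x)) :
    fderiv ℝ u (t • x) = fderiv ℝ u x := by
  have h1 := htx.hasFDerivAt.comp x ((hasFDerivAt_id (𝕜 := ℝ) x).const_smul t)
  have h2 : HasFDerivAt (fun y => u (t • y)) (t • fderiv ℝ u x) x := by
    simpa only [hhom t ht.le] using hx.hasFDerivAt.const_mul t
  ext ξ
  have h3 := congrArg (fun T => T ξ) (h1.unique h2)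
  simpa [ht.ne'] using h3

/-- Euler's identity for positively one-homogeneous functions. -/
theorem fderiv_self_of_homogeneous {E : Type*} [NormedAddCommGroup E] [NormedSpace ℝ E]
    {u : E → ℝ} (hhom : ∀ t : ℝ, 0 ≤ t → ∀ x, u (t • x) = t * u x) {x : E}
    (hx : DifferentiableAt ℝ u x) : fderiv ℝ u x x = u x := by
  have hx' : HasFDerivAt u (fderiv ℝ u x) ((1 : ℝ) • x) := by simpa using hx.hasFDerivAt
  have h1 : HasDerivAt (fun t : ℝ => u (t • x)) (fderiv ℝ u x ((1 : ℝ) • x)) 1 :=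
    hx'.comp_hasDerivAt (1 : ℝ) ((hasDerivAt_id (1 : ℝ)).smul_const x)
  have h2 : HasDerivAt (fun t : ℝ => u (t • x)) (1 * u x) 1 := by
    refine ((hasDerivAt_id (1 : ℝ)).mul_const (u x)).congr_of_eventuallyEq ?_
    filter_upwards [lt_mem_nhds one_pos] with t ht using hhom t ht.le x
  simpa using h1.unique h2

/-- For `n ≥ 2`, a Lipschitz, positively one-homogeneous function
`u : ℝⁿ → ℝ` (so its graph is a cone) that is smooth on `ℝⁿ \ {0}` and satisfies the minimal
surface equation `(1 + |∇u|²)·Δu − ⟨∇u,(D²u)∇u⟩ = 0` there, is linear: `u(x) = ⟨a, x⟩`. -/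
theorem subsequent_singularities_stmt9 {n : ℕ} (hn : 2 ≤ n)
    (u : EuclideanSpace ℝ (Fin n) → ℝ)
    (hlip : ∃ L : NNReal, LipschitzWith L u)
    (hhom : ∀ t : ℝ, 0 ≤ t → ∀ x : EuclideanSpace ℝ (Fin n), u (t • x) = t * u x)
    (hsmooth : ContDiffOn ℝ (⊤ : ℕ∞) u {(0 : EuclideanSpace ℝ (Fin n))}ᶜ)
    (hmse : ∀ x : EuclideanSpace ℝ (Fin n), x ≠ 0 →
      (1 + ‖gradient u x‖ ^ 2) * lap u x - ⟪gradient u x, hess u x (gradient u x)⟫ = 0) :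
    ∃ a : EuclideanSpace ℝ (Fin n), ∀ x, u x = ⟪a, x⟫ := by
  set Ω : Set (EuclideanSpace ℝ (Fin n)) := {0}ᶜ
  have hΩ : IsOpen Ω := isOpen_compl_singleton
  have hconn : IsConnected Ω := by
    refine isConnected_compl_singleton_of_one_lt_rank ?_ 0
    rw [← Module.finrank_eq_rank, finrank_euclideanSpace_fin]
    exact_mod_cast hn
  have hC : ∀ x ∈ Ω, ContDiffAt ℝ (⊤ : ℕ∞) u x := fun x hx =>
    hsmooth.contDiffAt (hΩ.mem_nhds hx)
  have hC3 : ∀ x ∈ Ω, ContDiffAt ℝ 3 u x := fun x hx => (hC x hx).of_le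
    (WithTop.coe_le_coe.2 (le_top : (3 : ℕ∞) ≤ ⊤))
  have hC2 : ∀ x ∈ Ω, ContDiffAt ℝ 2 u x := fun x hx => (hC3 x hx).of_le (by norm_num)
  have hdiff : ∀ x ∈ Ω, DifferentiableAt ℝ u x := fun x hx => (hC2 x hx).differentiableAt (by simp)
  have hop : ∀ x ∈ Ω, minimalOp (gradient u x) (fderiv ℝ (fderiv ℝ u) x) = 0 := fun x hx => by
    rw [minimalOp_gradient (hC2 x hx)]
    exact hmse x hx
  have hG : ContinuousOn (gradient u) Ω := fun x hx =>
    ((hC2 x hx).gradient (m := 1) (by norm_num)).continuousAt.continuousWithinAt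
  have hH : ContinuousOn (fderiv ℝ (gradient u)) Ω := fun x hx =>
    (((hC2 x hx).gradient (m := 1) (by norm_num)).fderiv_right (m := 0)
      (by simp)).continuousAt.continuousWithinAt
  have hB : ContinuousOn
      (fun x => (2 : ℝ) • (lap u x • gradient u x - hess u x (gradient u x))) Ω := by
    simp only [lap, hess]
    fun_prop
  obtain ⟨x₀, hx₀⟩ := hconn.nonempty
  have hconst : ∀ e, ∀ x ∈ Ω, fderiv ℝ u x e = fderiv ℝ u x₀ e := by
    intro e
    have hw : ContDiffOn ℝ 2 (fun y => fderiv ℝ u y e) Ω := fun x hx =>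
      (((hC3 x hx).fderiv_right (m := 2) (by norm_num)).clm_apply
        contDiffAt_const).contDiffWithinAt
    have hsphere : sphere (0 : EuclideanSpace ℝ (Fin n)) 1 ⊆ Ω := fun x hx =>
      ne_zero_of_mem_unit_sphere ⟨x, hx⟩
    have hunit : ∀ x ∈ Ω, ‖x‖⁻¹ • x ∈ sphere (0 : EuclideanSpace ℝ (Fin n)) 1 := fun x hx => by
      rw [mem_sphere_zero_iff_norm]
      exact norm_smul_inv_norm hx
    obtain ⟨a, ha, hamax⟩ := (isCompact_sphere (0 : EuclideanSpace ℝ (Fin n)) 1).exists_isMaxOn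
      ⟨_, hunit x₀ hx₀⟩ (hw.continuousOn.mono hsphere)
    have hmax : IsMaxOn (fun y => fderiv ℝ u y e) Ω a := fun x hx => by
      have h1 : fderiv ℝ u (‖x‖⁻¹ • x) e ≤ fderiv ℝ u a e := hamax (hunit x hx)
      rwa [fderiv_smul_of_homogeneous hhom (inv_pos.2 (norm_pos_iff.2 hx)) (hdiff x hx)
        (hdiff _ (hsphere (hunit x hx)))] at h1
    have hall := eq_of_isMaxOn_of_minimalOp hΩ hconn.isPreconnected hw hG hB
      (fun x hx => minimalOp_fderiv_fderiv_apply (hC3 x hx)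
        (mem_of_superset (hΩ.mem_nhds hx) hop) e) (hsphere ha) hmax
    exact fun x hx => (hall x hx).trans (hall x₀ hx₀).symm
  refine ⟨gradient u x₀, fun x => ?_⟩
  rw [inner_gradient_left]
  by_cases hx : x = 0
  · subst hx
    simpa using hhom 0 le_rfl 0
  · rw [← hconst x x hx, fderiv_self_of_homogeneous hhom (hdiff x hx)]
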